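/- There exists a constant C > 0 such that for every d ≥ 1, every Lipschitz function f : ℝ → ℝ with Lipschitz constant at most 1, every d×d Hermitian complex matrix A with spectral decomposition A = U·diag(μ₁,…,μ_d)·U* (U unitary, μᵢ ∈ ℝ), every x ∈ M_d(ℂ), and every nonempty subset S of {1,…,d}, the following holds: setting f(A) = U·diag(f(μ₁),…,f(μ_d))·U* and T = f(A)·x − x·f(A), one has ∑_{i ∈ S} σᵢ(T) ≤ C·log(1 + |S|)·‖A·x − x·A‖₁, where the σᵢ(T) are the singular values of T (in any fixed enumeration) and ‖·‖₁ is the Schatten 1-norm (sum of all singular values). -/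

import Mathlib

open Finset Matrix

/-- The singular values of a square complex matrix: the square roots of the eigenvalues of
the positive semidefinite Hermitian matrix `Mᴴ * M`. -/
noncomputable def singularValues {d : ℕ} (M : Matrix (Fin d) (Fin d) ℂ) : Fin d → ℝ :=
  fun i => Real.sqrt ((Matrix.isHermitian_conjTranspose_mul_self M).eigenvalues i)

/-- The Schatten `p`-norm of a square complex matrix: `(∑ᵢ σᵢ(M)^p)^(1/p)`. -/
noncomputable def schattenNorm {d : ℕ} (p : ℝ) (M : Matrix (Fin d) (Fin d) ℂ) : ℝ :=
  (∑ i, singularValues M i ^ p) ^ (1 / p)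

noncomputable def WL.hs {d : ℕ} (M : Matrix (Fin d) (Fin d) ℂ) : ℝ := ∑ i, ∑ j, ‖M i j‖ ^ 2

def WL.Contr {d : ℕ} (X : Matrix (Fin d) (Fin d) ℂ) : Prop :=
  ∀ z : Fin d → ℂ, ∑ i, ‖(X *ᵥ z) i‖ ^ 2 ≤ ∑ i, ‖z i‖ ^ 2

namespace WL

lemma hs_nonneg {d : ℕ} (M : Matrix (Fin d) (Fin d) ℂ) : 0 ≤ hs M := by
  unfold hs; positivity

lemma trace_conj_mul {d : ℕ} (X M : Matrix (Fin d) (Fin d) ℂ) :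
    (Xᴴ * M).trace = ∑ j, ∑ i, star (X i j) * M i j := by
  simp [Matrix.trace, Matrix.mul_apply]

lemma star_mul_self' (z : ℂ) : star z * z = ((‖z‖ ^ 2 : ℝ) : ℂ) := by
  have := RCLike.conj_mul z
  push_cast
  exact this

lemma trace_hs {d : ℕ} (M : Matrix (Fin d) (Fin d) ℂ) :
    (Mᴴ * M).trace = ((hs M : ℝ) : ℂ) := by
  rw [trace_conj_mul, hs, Finset.sum_comm]
  push_cast
  refine Finset.sum_congr rfl fun i _ => Finset.sum_congr rfl fun j _ => ?_
  rw [star_mul_self']; push_cast; rfl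

lemma dot_norm {d : ℕ} (z : Fin d → ℂ) : star z ⬝ᵥ z = ((∑ i, ‖z i‖ ^ 2 : ℝ) : ℂ) := by
  simp only [dotProduct, Pi.star_apply, star_mul_self']
  push_cast; rfl

lemma unitary_norm {d : ℕ} {U : Matrix (Fin d) (Fin d) ℂ} (hU : Uᴴ * U = 1) (z : Fin d → ℂ) :
    ∑ i, ‖(U *ᵥ z) i‖ ^ 2 = ∑ i, ‖z i‖ ^ 2 := by
  have h : star (U *ᵥ z) ⬝ᵥ (U *ᵥ z) = star z ⬝ᵥ z := by
    rw [Matrix.star_mulVec, ← Matrix.dotProduct_mulVec, Matrix.mulVec_mulVec, hU, Matrix.one_mulVec]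
  rw [dot_norm, dot_norm] at h
  exact_mod_cast h

/-- singular value decomposition, weak form -/
lemma svd {d : ℕ} (M : Matrix (Fin d) (Fin d) ℂ) :
    ∃ G V : Matrix (Fin d) (Fin d) ℂ, Vᴴ * V = 1 ∧ V * Vᴴ = 1 ∧ M = G * Vᴴ ∧
      Gᴴ * G = Matrix.diagonal (fun i => ((singularValues M i ^ 2 : ℝ) : ℂ)) := by
  set hH := Matrix.isHermitian_conjTranspose_mul_self M
  set V : Matrix (Fin d) (Fin d) ℂ := (hH.eigenvectorUnitary : Matrix (Fin d) (Fin d) ℂ) with hV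
  have h1 : Vᴴ * V = 1 := Matrix.mem_unitaryGroup_iff'.1 hH.eigenvectorUnitary.2
  have h2 : V * Vᴴ = 1 := Matrix.mem_unitaryGroup_iff.1 hH.eigenvectorUnitary.2
  have hs : Mᴴ * M = V * Matrix.diagonal (fun i => (hH.eigenvalues i : ℂ)) * Vᴴ := by
    have := hH.spectral_theorem
    rw [Unitary.conjStarAlgAut_apply] at this
    exact this
  refine ⟨M * V, V, h1, h2, by rw [Matrix.mul_assoc, h2, Matrix.mul_one], ?_⟩
  have : (M * V)ᴴ * (M * V) = Vᴴ * (Mᴴ * M) * V := by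
    rw [Matrix.conjTranspose_mul]; simp only [Matrix.mul_assoc]
  rw [this, hs]
  have : Vᴴ * (V * Matrix.diagonal (fun i => (hH.eigenvalues i : ℂ)) * Vᴴ) * V
      = (Vᴴ * V) * Matrix.diagonal (fun i => (hH.eigenvalues i : ℂ)) * (Vᴴ * V) := by
    simp only [Matrix.mul_assoc]
  rw [this, h1, Matrix.one_mul, Matrix.mul_one]
  congr 1
  funext i
  rw [singularValues, Real.sq_sqrt]
  exact Matrix.eigenvalues_conjTranspose_mul_self_nonneg M i

lemma sv_nonneg {d : ℕ} (M : Matrix (Fin d) (Fin d) ℂ) (i) : 0 ≤ singularValues M i :=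
  Real.sqrt_nonneg _

lemma col_norm {d : ℕ} {G : Matrix (Fin d) (Fin d) ℂ} {s : Fin d → ℝ}
    (h : Gᴴ * G = Matrix.diagonal (fun i => (s i : ℂ))) (k : Fin d) :
    ∑ i, ‖G i k‖ ^ 2 = s k := by
  have := congrFun (congrFun h k) k
  simp only [Matrix.mul_apply, Matrix.conjTranspose_apply, Matrix.diagonal_apply_eq,
    star_mul_self'] at this
  exact_mod_cast this

lemma sum_sv_sq {d : ℕ} (M : Matrix (Fin d) (Fin d) ℂ) :
    ∑ i, singularValues M i ^ 2 = hs M := by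
  have h := (Matrix.isHermitian_conjTranspose_mul_self M).trace_eq_sum_eigenvalues
  rw [trace_hs] at h
  have h' : hs M = ∑ i, (Matrix.isHermitian_conjTranspose_mul_self M).eigenvalues i := by
    have h2 : ((hs M : ℝ) : ℂ) = ((∑ i, (Matrix.isHermitian_conjTranspose_mul_self M).eigenvalues i : ℝ) : ℂ) := by
      rw [h, Complex.ofReal_sum]; rfl
    exact Complex.ofReal_injective h2
  rw [h']
  refine Finset.sum_congr rfl fun i _ => ?_
  rw [singularValues, Real.sq_sqrt]
  exact Matrix.eigenvalues_conjTranspose_mul_self_nonneg M i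

lemma sum_sv_le {d : ℕ} (M : Matrix (Fin d) (Fin d) ℂ) :
    (∑ i, singularValues M i) ^ 2 ≤ M.rank * hs M := by
  classical
  have hr : M.rank = #{i | singularValues M i ≠ 0} := by
    have hr0 : (Mᴴ * M).rank = M.rank := by
      open scoped ComplexOrder in exact Matrix.rank_conjTranspose_mul_self M
    rw [← hr0, (Matrix.isHermitian_conjTranspose_mul_self M).rank_eq_card_non_zero_eigs,
      Fintype.card_subtype]
    congr 1
    ext i
    have h0 := Matrix.eigenvalues_conjTranspose_mul_self_nonneg M i
    have h1 : singularValues M i ≠ 0 ↔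
        (Matrix.isHermitian_conjTranspose_mul_self M).eigenvalues i ≠ 0 :=
      not_iff_not.2 (Real.sqrt_eq_zero h0)
    rw [Finset.mem_filter, Finset.mem_filter, h1]
  have h1 : ∑ i, singularValues M i = ∑ i with singularValues M i ≠ 0, singularValues M i := by
    rw [Finset.sum_filter_ne_zero]
  rw [h1, hr]
  refine (sq_sum_le_card_mul_sum_sq).trans ?_
  gcongr
  rw [← sum_sv_sq]
  exact Finset.sum_le_sum_of_subset_of_nonneg (Finset.filter_subset _ _) fun _ _ _ => sq_nonneg _

lemma cs_norm {ι : Type*} (s : Finset ι) (u v : ι → ℂ) :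
    ‖∑ i ∈ s, star (u i) * v i‖ ^ 2 ≤ (∑ i ∈ s, ‖u i‖ ^ 2) * ∑ i ∈ s, ‖v i‖ ^ 2 := by
  have h1 : ‖∑ i ∈ s, star (u i) * v i‖ ≤ ∑ i ∈ s, ‖u i‖ * ‖v i‖ := by
    refine (norm_sum_le _ _).trans (le_of_eq ?_)
    simp
  calc _ ≤ (∑ i ∈ s, ‖u i‖ * ‖v i‖) ^ 2 := by gcongr
    _ ≤ _ := Finset.sum_mul_sq_le_sq_mul_sq _ _ _

lemma trace_hs_le {d : ℕ} (X M : Matrix (Fin d) (Fin d) ℂ) :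
    ‖(Xᴴ * M).trace‖ ^ 2 ≤ hs X * hs M := by
  rw [trace_conj_mul, Finset.sum_comm, hs, hs, ← Finset.sum_product', ← Finset.sum_product',
    ← Finset.sum_product']
  exact cs_norm _ (fun p : Fin d × Fin d => X p.1 p.2) (fun p => M p.1 p.2)

lemma trace_contr_le {d : ℕ} {X : Matrix (Fin d) (Fin d) ℂ} (hX : Contr X)
    (M : Matrix (Fin d) (Fin d) ℂ) :
    ‖(Xᴴ * M).trace‖ ≤ ∑ i, singularValues M i := by
  obtain ⟨G, V, h1, h2, hM, hG⟩ := svd M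
  have : (Xᴴ * M).trace = ((X * V)ᴴ * G).trace := by
    conv_lhs => rw [hM]
    rw [← Matrix.mul_assoc, Matrix.trace_mul_comm, Matrix.conjTranspose_mul, Matrix.mul_assoc]
  rw [this, trace_conj_mul]
  refine (norm_sum_le _ _).trans (Finset.sum_le_sum fun k _ => ?_)
  refine le_of_sq_le_sq ?_ (sv_nonneg _ _)
  refine (cs_norm _ _ _).trans ?_
  rw [col_norm hG]
  have h3 : ∑ i, ‖(X * V) i k‖ ^ 2 ≤ 1 := by
    have := hX (fun i => V i k)
    have h4 := col_norm (G := V) (s := fun _ => 1) (by rw [h1]; ext i j; simp [Matrix.one_apply, Matrix.diagonal_apply]) k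
    rw [h4] at this
    exact this
  nlinarith [sq_nonneg (singularValues M k)]

lemma exists_dual {d : ℕ} (T : Matrix (Fin d) (Fin d) ℂ) (S : Finset (Fin d)) :
    ∃ X : Matrix (Fin d) (Fin d) ℂ, Contr X ∧ hs X ≤ S.card ∧
      (Xᴴ * T).trace = ((∑ i ∈ S, singularValues T i : ℝ) : ℂ) := by
  classical
  obtain ⟨G, V, h1, h2, hT, hG⟩ := svd T
  set s := singularValues T
  let D : Fin d → ℝ := fun i => if i ∈ S then (s i)⁻¹ else 0
  let DM : Matrix (Fin d) (Fin d) ℂ := Matrix.diagonal (fun i => (D i : ℂ))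
  have hDM : DMᴴ = DM := by
    simp [DM, Matrix.diagonal_conjTranspose, Pi.star_def]
  let E : Fin d → ℝ := fun i => D i * s i ^ 2 * D i
  have hE0 : ∀ i, E i ≤ if i ∈ S then 1 else 0 := by
    intro i
    simp only [E, D]
    split_ifs
    · by_cases h : s i = 0
      · simp [h]
      · field_simp; simp
    · simp
  have hXX : (G * DM * Vᴴ)ᴴ * (G * DM * Vᴴ) = V * Matrix.diagonal (fun i => (E i : ℂ)) * Vᴴ := by
    have : (G * DM * Vᴴ)ᴴ * (G * DM * Vᴴ) = V * (DM * (Gᴴ * G) * DM) * Vᴴ := by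
      simp only [Matrix.conjTranspose_mul, Matrix.conjTranspose_conjTranspose, hDM, Matrix.mul_assoc]
    rw [this, hG]
    simp only [DM, Matrix.diagonal_mul_diagonal, E]
    push_cast; rfl
  refine ⟨G * DM * Vᴴ, ?_, ?_, ?_⟩
  · intro z
    set y := Vᴴ *ᵥ z with hy
    have hz : ∑ i, ‖y i‖ ^ 2 = ∑ i, ‖z i‖ ^ 2 :=
      unitary_norm (U := Vᴴ) (by simpa using h2) z
    have h3 : star ((G * DM * Vᴴ) *ᵥ z) ⬝ᵥ ((G * DM * Vᴴ) *ᵥ z)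
        = star y ⬝ᵥ (Matrix.diagonal (fun i => (E i : ℂ)) *ᵥ y) := by
      rw [Matrix.star_mulVec, ← Matrix.dotProduct_mulVec, Matrix.mulVec_mulVec, hXX, hy,
        Matrix.star_mulVec, ← Matrix.dotProduct_mulVec]
      simp [Matrix.mulVec_mulVec, Matrix.mul_assoc]
    have h4 : star y ⬝ᵥ (Matrix.diagonal (fun i => (E i : ℂ)) *ᵥ y)
        = ((∑ i, E i * ‖y i‖ ^ 2 : ℝ) : ℂ) := by
      simp only [dotProduct, Matrix.mulVec_diagonal, Pi.star_apply]
      push_cast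
      refine Finset.sum_congr rfl fun i _ => ?_
      have := star_mul_self' (y i)
      push_cast at this
      rw [← this]; ring
    rw [h4, dot_norm] at h3
    have h5 : ∑ i, ‖((G * DM * Vᴴ) *ᵥ z) i‖ ^ 2 = ∑ i, E i * ‖y i‖ ^ 2 := by exact_mod_cast h3
    rw [h5, ← hz]
    refine Finset.sum_le_sum fun i _ => ?_
    have := hE0 i
    have h6 : E i ≤ 1 := this.trans (by split_ifs <;> norm_num)
    nlinarith [sq_nonneg ‖y i‖]
  · have h3 := trace_hs (G * DM * Vᴴ)
    rw [hXX, Matrix.trace_mul_comm, ← Matrix.mul_assoc, h1, Matrix.one_mul, Matrix.trace_diagonal] at h3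
    have h4 : ∑ i, E i = hs (G * DM * Vᴴ) := by exact_mod_cast h3
    rw [← h4]
    calc ∑ i, E i ≤ ∑ i, if i ∈ S then (1:ℝ) else 0 := Finset.sum_le_sum fun i _ => hE0 i
      _ = S.card := by simp
  · have : (G * DM * Vᴴ)ᴴ * T = V * (DM * (Gᴴ * G)) * Vᴴ := by
      conv_lhs => rw [hT]
      simp only [Matrix.conjTranspose_mul, Matrix.conjTranspose_conjTranspose, hDM, Matrix.mul_assoc]
    rw [this, hG, Matrix.trace_mul_comm, ← Matrix.mul_assoc, h1, Matrix.one_mul]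
    simp only [DM, Matrix.diagonal_mul_diagonal, Matrix.trace_diagonal]
    have : ∑ i, D i * s i ^ 2 = ∑ i ∈ S, s i := by
      have h3 : ∀ i, D i * s i ^ 2 = if i ∈ S then s i else 0 := by
        intro i
        simp only [D]
        split_ifs
        · by_cases h : s i = 0
          · simp [h]
          · field_simp
        · simp
      simp only [h3]
      simp
    rw [← this]; push_cast; rfl

lemma contr_unitary {d : ℕ} {X U : Matrix (Fin d) (Fin d) ℂ} (hX : Contr X) (h1 : Uᴴ * U = 1)
    (h2 : U * Uᴴ = 1) : Contr (Uᴴ * X * U) := by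
  intro z
  rw [← Matrix.mulVec_mulVec, ← Matrix.mulVec_mulVec, unitary_norm (U := Uᴴ) (by simpa using h2)]
  refine (hX _).trans (le_of_eq ?_)
  exact unitary_norm h1 z

lemma hs_unitary {d : ℕ} {X U : Matrix (Fin d) (Fin d) ℂ} 
    (h2 : U * Uᴴ = 1) : hs (Uᴴ * X * U) = hs X := by
  have h : ((Uᴴ * X * U)ᴴ * (Uᴴ * X * U)).trace = (Xᴴ * X).trace := by
    have : (Uᴴ * X * U)ᴴ * (Uᴴ * X * U) = Uᴴ * (Xᴴ * (U * Uᴴ) * X * U) := by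
      simp only [Matrix.conjTranspose_mul, Matrix.conjTranspose_conjTranspose, Matrix.mul_assoc]
    rw [this, h2, Matrix.trace_mul_comm, Matrix.mul_one, Matrix.mul_assoc, h2, Matrix.mul_one]
  rw [trace_hs, trace_hs] at h
  exact_mod_cast h

lemma hs_add_le {d : ℕ} (X Y : Matrix (Fin d) (Fin d) ℂ) : hs (X + Y) ≤ 2 * hs X + 2 * hs Y := by
  simp only [hs, Finset.mul_sum, ← Finset.sum_add_distrib]
  refine Finset.sum_le_sum fun i _ => Finset.sum_le_sum fun j _ => ?_
  have := norm_add_le (X i j) (Y i j)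
  rw [Matrix.add_apply]
  nlinarith [norm_nonneg (X i j + Y i j), sq_nonneg (‖X i j‖ - ‖Y i j‖)]

end WL

namespace WL

noncomputable def dq (f : ℝ → ℝ) (x y : ℝ) : ℝ := (f x - f y) / (x - y)

lemma lip_abs {f : ℝ → ℝ} (hf : LipschitzWith 1 f) (x y : ℝ) : |f x - f y| ≤ |x - y| := by
  have := hf.dist_le_mul x y
  simpa [Real.dist_eq] using this

lemma dq_abs {f : ℝ → ℝ} (hf : LipschitzWith 1 f) (x y : ℝ) : |dq f x y| ≤ 1 := by
  rw [dq, abs_div]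
  exact div_le_one_of_le₀ (lip_abs hf x y) (abs_nonneg _)

lemma dq_comm (f : ℝ → ℝ) (x y : ℝ) : dq f x y = dq f y x := by
  rw [dq, dq, ← neg_sub (f y), ← neg_sub y, neg_div_neg_eq]

lemma dq_err {f : ℝ → ℝ} (hf : LipschitzWith 1 f) {x y z l : ℝ} (k : ℕ)
    (hyz : |y - z| ≤ l) (h1 : k * l ≤ |x - y|) (h2 : k * l ≤ |x - z|) :
    (dq f x y - dq f x z) ^ 2 ≤ 16 / ((k : ℝ) + 1) ^ 2 := by
  have hl : 0 ≤ l := (abs_nonneg _).trans hyz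
  have h0 : |dq f x y - dq f x z| ≤ 2 := by
    have := abs_sub (dq f x y) (dq f x z)
    linarith [dq_abs hf x y, dq_abs hf x z]
  have hk : k * |dq f x y - dq f x z| ≤ 2 := by
    rcases Nat.eq_zero_or_pos k with hk | hk
    · simp [hk]
    have hk' : (0:ℝ) < k := by exact_mod_cast hk
    rcases hl.eq_or_lt with hl0 | hl0
    · have : y = z := by
        rw [← hl0] at hyz
        exact sub_eq_zero.1 (abs_nonpos_iff.1 hyz)
      simp [this]
    have hy : 0 < |x - y| := lt_of_lt_of_le (by positivity) h1
    have hz : 0 < |x - z| := lt_of_lt_of_le (by positivity) h2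
    have hy0 : x - y ≠ 0 := abs_pos.1 hy
    have hz0 : x - z ≠ 0 := abs_pos.1 hz
    have e : dq f x y - dq f x z = ((f z - f y) + dq f x z * (y - z)) / (x - y) := by
      rw [dq, dq]; field_simp; ring
    rw [e, abs_div]
    have h3 : |(f z - f y) + dq f x z * (y - z)| ≤ 2 * l := by
      have a1 := abs_add_le (f z - f y) (dq f x z * (y - z))
      have a2 := lip_abs hf z y
      rw [abs_sub_comm z y] at a2
      rw [abs_mul] at a1
      have a3 := dq_abs hf x z
      have a4 : |dq f x z| * |y - z| ≤ 1 * l := by gcongr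
      linarith
    rw [← mul_div_assoc, div_le_iff₀ hy]
    nlinarith
  have h4 : ((k:ℝ) + 1) * |dq f x y - dq f x z| ≤ 4 := by linarith
  rw [le_div_iff₀ (by positivity), ← sq_abs (dq f x y - dq f x z), ← mul_pow]
  have : 0 ≤ |dq f x y - dq f x z| * ((k:ℝ) + 1) := by positivity
  nlinarith

lemma sum_inv_sq (K : ℕ) : ∑ k ∈ range K, 16 / ((k : ℝ) + 1) ^ 2 ≤ 32 := by
  have : ∀ K : ℕ, ∑ k ∈ range (K+1), 16 / ((k : ℝ) + 1) ^ 2 ≤ 32 - 16 / ((K:ℝ)+1) := by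
    intro K
    induction K with
    | zero => norm_num
    | succ K ih =>
      rw [Finset.sum_range_succ]
      have : 16 / (((K+1:ℕ):ℝ)+1)^2 ≤ 16/((K:ℝ)+1) - 16/(((K+1:ℕ):ℝ)+1) := by
        push_cast
        rw [div_sub_div _ _ (by positivity) (by positivity), div_le_div_iff₀ (by positivity) (by positivity)]
        have : (0:ℝ) ≤ K := by positivity
        nlinarith
      linarith
  cases K with
  | zero => simp
  | succ K => exact (this K).trans (by have : (0:ℝ) ≤ 16/((K:ℝ)+1) := by positivity
                                       linarith)

/-- counting function: number of elements of `Z` strictly between `m` and `n` -/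
def btw {K : ℕ} (Z : Finset (Fin K)) (m n : Fin K) : Finset (Fin K) :=
  Z.filter fun r => (m < r ∧ r < n) ∨ (n < r ∧ r < m)

lemma sum_inj {K : ℕ} (Y : Finset (Fin K)) (k : Fin K → ℕ) (hk : ∀ m, k m ≤ K)
    (hinj : ∀ a ∈ Y, ∀ b ∈ Y, a < b → k a ≠ k b) :
    ∑ m ∈ Y, 16 / ((k m : ℝ) + 1) ^ 2 ≤ 32 := by
  have hi : Set.InjOn k Y := by
    intro a ha b hb hab
    rcases lt_trichotomy a b with h | h | h
    · exact absurd hab (hinj a ha b hb h)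
    · exact h
    · exact absurd hab.symm (hinj b hb a ha h)
  have := Finset.sum_image (f := fun k : ℕ => 16 / ((k : ℝ) + 1) ^ 2) hi
  rw [← this]
  refine le_trans ?_ (sum_inv_sq (K+1))
  refine Finset.sum_le_sum_of_subset_of_nonneg ?_ (fun _ _ _ => by positivity)
  intro r hr
  obtain ⟨m, _, rfl⟩ := Finset.mem_image.1 hr
  have := hk m
  simp; omega

lemma sum_btw {K : ℕ} (Z : Finset (Fin K)) (n : Fin K) :
    ∑ m ∈ Z.filter (· ≠ n), 16 / (((btw Z m n).card : ℝ) + 1) ^ 2 ≤ 64 := by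
  have hsplit : Z.filter (· ≠ n) = Z.filter (· < n) ∪ Z.filter (n < ·) := by
    ext m; simp only [mem_filter, mem_union, ne_iff_lt_or_gt]; tauto
  have hdis : Disjoint (Z.filter (· < n)) (Z.filter (n < ·)) := by
    rw [Finset.disjoint_filter]; intro x _ h1 h2; exact absurd h1 (not_lt.2 h2.le)
  have hK : ∀ m, (btw Z m n).card ≤ K := fun m => by
    simpa using Finset.card_le_univ (btw Z m n)
  rw [hsplit, Finset.sum_union hdis]
  have a1 : ∑ m ∈ Z.filter (· < n), 16 / (((btw Z m n).card : ℝ) + 1) ^ 2 ≤ 32 := by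
    refine sum_inj _ _ hK fun a ha b hb hab => ne_of_gt (Finset.card_lt_card ?_)
    simp only [mem_filter] at ha hb
    refine Finset.ssubset_iff_subset_ne.2 ⟨?_, ?_⟩
    · intro r hr; simp only [btw, mem_filter] at hr ⊢; grind
    · intro h
      have : b ∈ btw Z a n := by simp only [btw, mem_filter]; grind
      rw [← h] at this
      simp only [btw, mem_filter] at this; grind
  have a2 : ∑ m ∈ Z.filter (n < ·), 16 / (((btw Z m n).card : ℝ) + 1) ^ 2 ≤ 32 := by
    refine sum_inj _ _ hK fun a ha b hb hab => ne_of_lt (Finset.card_lt_card ?_)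
    simp only [mem_filter] at ha hb
    refine Finset.ssubset_iff_subset_ne.2 ⟨?_, ?_⟩
    · intro r hr; simp only [btw, mem_filter] at hr ⊢; grind
    · intro h
      have : a ∈ btw Z b n := by simp only [btw, mem_filter]; grind
      rw [← h] at this
      simp only [btw, mem_filter] at this; grind
  linarith

lemma cell_dist {d K : ℕ} {μ : Fin d → ℝ} (hμ : Monotone μ) {c : Fin d → Fin K} (hc : Monotone c)
    {l : ℝ} (j : Fin d) (Z : Finset (Fin K)) :
    (∀ r ∈ Z, ∃ i₁ i₂, c i₁ = r ∧ c i₂ = r ∧ l ≤ μ i₂ - μ i₁) →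
    ∀ i, c j < c i → (∀ r ∈ Z, c j < r ∧ r < c i) → (Z.card : ℝ) * l ≤ μ i - μ j := by
  induction Z using Finset.induction_on_max with
  | empty =>
    intro _ i hi _
    have : j ≤ i := le_of_not_gt fun h => absurd (hc h.le) (not_le.2 hi)
    simpa using hμ this
  | insert a s ha ih =>
    intro h i hi hr
    obtain ⟨i₁, i₂, e1, e2, h3⟩ := h a (mem_insert_self _ _)
    have hra := hr a (mem_insert_self _ _)
    have := ih (fun r hr' => h r (mem_insert_of_mem hr')) i₁ (e1 ▸ hra.1)
      (fun r hr' => ⟨(hr r (mem_insert_of_mem hr')).1, e1 ▸ ha r hr'⟩)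
    have hle : i₂ ≤ i := le_of_not_gt fun h => absurd (hc h.le) (not_le.2 (e2 ▸ hra.2))
    have := hμ hle
    rw [Finset.card_insert_of_notMem (fun h => lt_irrefl _ (ha a h))]
    push_cast
    linarith

lemma exists_len {d K : ℕ} (μ : Fin d → ℝ) (c : Fin d → Fin K) (n : Fin K) :
    ∃ l : ℝ, 0 ≤ l ∧ (∀ i j, c i = n → c j = n → |μ i - μ j| ≤ l) ∧
      (0 < l → ∃ i₁ i₂, c i₁ = n ∧ c i₂ = n ∧ l = μ i₂ - μ i₁) := by
  classical
  by_cases h : ∃ i, c i = n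
  · obtain ⟨i, hi⟩ := h
    let P : Finset (Fin d × Fin d) := univ.filter fun p => c p.1 = n ∧ c p.2 = n
    have hP : P.Nonempty := ⟨(i, i), by simp [P, hi]⟩
    obtain ⟨p, hp, hmax⟩ := P.exists_max_image (fun p => μ p.2 - μ p.1) hP
    have hp' : c p.1 = n ∧ c p.2 = n := by simpa [P] using hp
    refine ⟨μ p.2 - μ p.1, ?_, ?_, fun _ => ⟨p.1, p.2, hp'.1, hp'.2, rfl⟩⟩
    · simpa using hmax (i, i) (by simp [P, hi])
    · intro a b ha hb
      rw [abs_le]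
      have h1 := hmax (a, b) (by simp [P, ha, hb])
      have h2 := hmax (b, a) (by simp [P, ha, hb])
      simp only at h1 h2
      constructor <;> linarith
  · push Not at h
    exact ⟨0, le_rfl, fun i _ hi => absurd hi (h i), fun h => absurd h (lt_irrefl _)⟩

lemma approx_kernel {d K : ℕ} {f : ℝ → ℝ} (hf : LipschitzWith 1 f)
    {μ : Fin d → ℝ} (hμ : Monotone μ) {c : Fin d → Fin K} (hc : Monotone c) :
    ∃ (p1 : Fin d → Fin K → ℝ) (p2 : Fin K → Fin d → ℝ) (E : Fin K → Fin K → ℝ),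
      (∀ i j, (dq f (μ i) (μ j) - (p1 i (c j) + p2 (c i) j)) ^ 2 ≤ E (c i) (c j)) ∧
      (∀ m n, 0 ≤ E m n) ∧ ∑ m, ∑ n, E m n ≤ 129 * K := by
  classical
  choose l hl0 hl1 hl2 using exists_len μ c
  have hp : ∀ n, ∃ p : ℝ, ∀ j, c j = n → ∃ j', c j' = n ∧ p = μ j' := by
    intro n
    by_cases h : ∃ i, c i = n
    · obtain ⟨i, hi⟩ := h
      exact ⟨μ i, fun _ _ => ⟨i, hi, rfl⟩⟩
    · push Not at h
      exact ⟨0, fun j hj => absurd hj (h j)⟩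
  choose p hp using hp
  let Z : Fin K → Finset (Fin K) := fun n => univ.filter fun r => l n ≤ l r
  have hdist : ∀ i j, c i ≠ c j →
      ((btw (Z (c j)) (c i) (c j)).card : ℝ) * l (c j) ≤ |μ i - μ j| := by
    intro i j hij
    rcases (hl0 (c j)).eq_or_lt with h | h
    · rw [← h]; simp
    have hZ : ∀ r ∈ btw (Z (c j)) (c i) (c j),
        ∃ i₁ i₂, c i₁ = r ∧ c i₂ = r ∧ l (c j) ≤ μ i₂ - μ i₁ := by
      intro r hr
      simp only [btw, Z, mem_filter] at hr
      obtain ⟨i₁, i₂, e1, e2, e3⟩ := hl2 r (h.trans_le hr.1.2)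
      exact ⟨i₁, i₂, e1, e2, e3 ▸ hr.1.2⟩
    rcases lt_or_gt_of_ne hij with h' | h'
    · have := cell_dist hμ hc i _ hZ j h' (by
        intro r hr; simp only [btw, mem_filter] at hr; grind)
      rw [abs_sub_comm]
      exact this.trans (le_abs_self _)
    · have := cell_dist hμ hc j _ hZ i h' (by
        intro r hr; simp only [btw, mem_filter] at hr; grind)
      exact this.trans (le_abs_self _)
  have hkey : ∀ i j, c i ≠ c j → (dq f (μ i) (μ j) - dq f (μ i) (p (c j))) ^ 2 ≤
      16 / (((btw (Z (c j)) (c i) (c j)).card : ℝ) + 1) ^ 2 := by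
    intro i j hij
    obtain ⟨j', e, hj'⟩ := hp (c j) j rfl
    rw [hj']
    refine dq_err hf _ (hl1 (c j) j j' rfl e) (hdist i j hij) ?_
    have := hdist i j' (by rw [e]; exact hij)
    rwa [e] at this
  let h : Fin K → Fin K → ℝ := fun m n => 16 / (((btw (Z n) m n).card : ℝ) + 1) ^ 2
  have hh : ∀ m n, 0 ≤ h m n := fun m n => by simp only [h]; positivity
  let E1 : Fin K → Fin K → ℝ := fun m n => if l n ≤ l m ∧ m ≠ n then h m n else 0
  have hE1 : ∀ m n, 0 ≤ E1 m n := fun m n => by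
    simp only [E1]; split_ifs; exacts [hh _ _, le_rfl]
  have hE1s : ∀ n, ∑ m, E1 m n ≤ 64 := by
    intro n
    refine le_trans (le_of_eq ?_) (sum_btw (Z n) n)
    simp only [E1, Z]
    rw [Finset.filter_filter, Finset.sum_filter]
  let E0 : Fin K → Fin K → ℝ := fun m n => if m = n then 1 else 0
  have hE0 : ∀ m n, 0 ≤ E0 m n := fun m n => by
    simp only [E0]; split_ifs <;> norm_num
  refine ⟨fun i n => if l n ≤ l (c i) ∧ c i ≠ n then dq f (μ i) (p n) else 0,
    fun m j => if l m < l (c j) ∧ c j ≠ m then dq f (p m) (μ j) else 0,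
    fun m n => E0 m n + E1 m n + E1 n m, ?_, ?_, ?_⟩
  · intro i j
    have q0 := hE0 (c i) (c j)
    have q1 := hE1 (c i) (c j)
    have q2 := hE1 (c j) (c i)
    by_cases hij : c i = c j
    · have : E0 (c i) (c j) = 1 := by simp [E0, hij]
      have h3 := dq_abs hf (μ i) (μ j)
      simp only [hij, ne_eq, not_true_eq_false, and_false, if_false, add_zero, sub_zero]
      rw [hij] at this q0 q1 q2
      rw [this, ← sq_abs]
      nlinarith [abs_nonneg (dq f (μ i) (μ j))]
    · by_cases hL : l (c j) ≤ l (c i)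
      · have : E1 (c i) (c j) = h (c i) (c j) := by simp [E1, hij, hL]
        have h3 := hkey i j hij
        simp only [hL, ne_eq, hij, not_false_eq_true, and_self, if_true, not_lt.2 hL, false_and,
          if_false, add_zero]
        simp only [h] at this
        linarith
      · have hL' := lt_of_not_ge hL
        have hji : c j ≠ c i := fun e => hij e.symm
        have : E1 (c j) (c i) = h (c j) (c i) := by simp [E1, hji, hL'.le]
        have h3 := hkey j i hji
        simp only [hL', hL, ne_eq, hji, not_false_eq_true, and_self, if_true, false_and,
          if_false, zero_add]
        rw [dq_comm f (μ i), dq_comm f (p (c i))]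
        simp only [h] at this
        linarith
  · intro m n
    have := hE0 m n
    have := hE1 m n
    have := hE1 n m
    positivity
  · simp only [Finset.sum_add_distrib]
    have s0 : ∑ m, ∑ n, E0 m n = K := by simp [E0]
    have s1 : ∑ m, ∑ n, E1 n m ≤ K * 64 := by
      refine (Finset.sum_le_sum fun m _ => hE1s m).trans (by simp)
    have s2 : ∑ m, ∑ n, E1 m n ≤ K * 64 := by rwa [Finset.sum_comm]
    linarith

end WL

namespace WL

noncomputable def Kmat {d : ℕ} (f : ℝ → ℝ) (μ : Fin d → ℝ) (a b : Fin d → ℂ) :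
    Matrix (Fin d) (Fin d) ℂ :=
  Matrix.of fun i j => (dq f (μ i) (μ j) : ℂ) * (a i * star (b j))

lemma rank_add_le' {m n : ℕ} (A B : Matrix (Fin m) (Fin n) ℂ) :
    (A + B).rank ≤ A.rank + B.rank := by
  unfold Matrix.rank
  have h : LinearMap.range (A + B).mulVecLin ≤
      LinearMap.range A.mulVecLin ⊔ LinearMap.range B.mulVecLin := by
    rintro _ ⟨v, rfl⟩
    rw [Matrix.mulVecLin_add]
    exact Submodule.add_mem_sup ⟨v, rfl⟩ ⟨v, rfl⟩
  exact (Submodule.finrank_mono h).trans (Submodule.finrank_add_le_finrank_add_finrank _ _)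

lemma sum_fiber {d K : ℕ} (c : Fin d → Fin K) (F : Fin K → ℝ) (u : Fin d → ℝ) :
    ∑ i, F (c i) * u i = ∑ m, F m * ∑ i with c i = m, u i := by
  rw [← Finset.sum_fiberwise univ c]
  refine Finset.sum_congr rfl fun m _ => ?_
  rw [Finset.mul_sum]
  refine Finset.sum_congr rfl fun i hi => ?_
  rw [(Finset.mem_filter.1 hi).2]

/-- partition into cells of small mass -/
lemma exists_cells {d : ℕ} (w : Fin d → ℝ) (hw : ∀ i, 0 ≤ w i) (hs : ∑ i, w i ≤ 2) (N : ℕ)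
    (hN : 0 < N) : ∃ c : Fin d → Fin (N + 1), Monotone c ∧
      ∀ m, ∑ i with c i = m, (if w i < 1 / N then w i else 0) ≤ 3 / N := by
  classical
  have hN' : (0:ℝ) < N := by exact_mod_cast hN
  let F : Fin d → ℝ := fun i => ∑ j with j < i, w j
  have hF0 : ∀ i, 0 ≤ F i := fun i => Finset.sum_nonneg fun j _ => hw j
  have hFm : Monotone F := fun i j hij =>
    Finset.sum_le_sum_of_subset_of_nonneg (fun r hr => by
      simp only [mem_filter, mem_univ, true_and] at hr ⊢; exact hr.trans_le hij) fun _ _ _ => hw _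
  have hF2 : ∀ i, F i ≤ 2 := fun i =>
    (Finset.sum_le_sum_of_subset_of_nonneg (Finset.filter_subset _ _) fun _ _ _ => hw _).trans hs
  have hb : ∀ i, ⌊N * F i / 2⌋₊ < N + 1 := by
    intro i
    rw [Nat.floor_lt (by have := hF0 i; positivity)]
    push_cast
    have := hF2 i
    nlinarith
  refine ⟨fun i => ⟨⌊N * F i / 2⌋₊, hb i⟩, ?_, ?_⟩
  · intro i j hij
    simp only [Fin.mk_le_mk]
    apply Nat.floor_le_floor
    have := hFm hij
    gcongr
  · intro m
    rw [← Finset.sum_filter]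
    set S := Finset.filter (fun i => w i < 1 / N)
      (Finset.filter (fun i => (⟨⌊N * F i / 2⌋₊, hb i⟩ : Fin (N+1)) = m) univ) with hS
    rcases S.eq_empty_or_nonempty with h | h
    · rw [h]; simp; positivity
    set i0 := S.max' h
    set i1 := S.min' h
    have m0 : i0 ∈ S := S.max'_mem h
    have m1 : i1 ∈ S := S.min'_mem h
    have hfl : ∀ i ∈ S, w i < 1 / N ∧ ⌊N * F i / 2⌋₊ = m.1 := by
      intro i hi
      simp only [hS, mem_filter, mem_univ, true_and] at hi
      exact ⟨hi.2, congrArg Fin.val hi.1⟩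
    have b1 : F i0 - F i1 ≤ 2 / N := by
      have e0 := Nat.lt_floor_add_one (N * F i0 / 2)
      have e1 := Nat.floor_le (show 0 ≤ N * F i1 / 2 by have := hF0 i1; positivity)
      rw [(hfl _ m0).2] at e0
      rw [(hfl _ m1).2] at e1
      rw [le_div_iff₀ hN']
      nlinarith
    have b2 : ∑ i ∈ S.erase i0, w i + F i1 ≤ F i0 := by
      have hd : Disjoint (S.erase i0) (univ.filter (· < i1)) := by
        rw [Finset.disjoint_left]
        intro r hr hr'
        have := S.min'_le r (Finset.mem_of_mem_erase hr)
        simp only [mem_filter, mem_univ, true_and] at hr'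
        exact absurd hr' (not_lt.2 this)
      simp only [F]
      rw [← Finset.sum_union hd]
      refine Finset.sum_le_sum_of_subset_of_nonneg ?_ fun _ _ _ => hw _
      intro r hr
      simp only [mem_union, mem_erase, mem_filter, mem_univ, true_and] at hr ⊢
      rcases hr with hr | hr
      · exact lt_of_le_of_ne (S.le_max' r hr.2) hr.1
      · exact hr.trans_le (S.le_max' _ m1)
    have b3 := (hfl _ m0).1
    rw [← Finset.sum_erase_add _ _ m0]
    have : (3:ℝ) / N = 2 / N + 1 / N := by ring
    linarith

lemma approx_mono {d : ℕ} {f : ℝ → ℝ} (hf : LipschitzWith 1 f)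
    {μ : Fin d → ℝ} (hμ : Monotone μ) (a b : Fin d → ℂ)
    (ha : ∑ i, ‖a i‖ ^ 2 ≤ 1) (hb : ∑ i, ‖b i‖ ^ 2 ≤ 1) (N : ℕ) (hN : 0 < N) :
    ∃ R : Matrix (Fin d) (Fin d) ℂ, R.rank ≤ 8 * N ∧ hs (Kmat f μ a b - R) ≤ 2500 / N := by
  classical
  have hN' : (0:ℝ) < N := by exact_mod_cast hN
  let w : Fin d → ℝ := fun i => ‖a i‖ ^ 2 + ‖b i‖ ^ 2
  have hw : ∀ i, 0 ≤ w i := fun i => by simp only [w]; positivity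
  have hsw : ∑ i, w i ≤ 2 := by simp only [w, Finset.sum_add_distrib]; linarith
  obtain ⟨c, hc, hmass⟩ := exists_cells w hw hsw N hN
  obtain ⟨p1, p2, E, hE, hE0, hEs⟩ := approx_kernel hf hμ hc
  let χ : Fin d → ℂ := fun i => if w i < 1 / N then 1 else 0
  let D : Matrix (Fin d) (Fin d) ℂ := Matrix.diagonal fun i => 1 - χ i
  let D' : Matrix (Fin d) (Fin d) ℂ := Matrix.diagonal fun i => χ i
  let K := Kmat f μ a b
  let G1 : Matrix (Fin d) (Fin (N+1)) ℂ := Matrix.of fun i n => χ i * a i * (p1 i n : ℂ)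
  let H1 : Matrix (Fin (N+1)) (Fin d) ℂ :=
    Matrix.of fun n j => if c j = n then χ j * star (b j) else 0
  let G2 : Matrix (Fin d) (Fin (N+1)) ℂ := Matrix.of fun i m => if c i = m then χ i * a i else 0
  let H2 : Matrix (Fin (N+1)) (Fin d) ℂ := Matrix.of fun m j => (p2 m j : ℂ) * (χ j * star (b j))
  have hD : D.rank ≤ 2 * N := by
    have h1 : D.rank = #{i | ¬ w i < 1 / N} := by
      simp only [D]
      rw [Matrix.rank_diagonal, Fintype.card_subtype]
      congr 1
      ext i
      simp only [mem_filter, mem_univ, true_and, χ]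
      split_ifs with h
      · exact ⟨fun h' => absurd (sub_self _) h', fun h' => absurd h h'⟩
      · exact ⟨fun _ => h, fun _ => by simp⟩
    rw [h1]
    have h2 : (#{i | ¬ w i < 1 / N} : ℝ) * (1 / N) ≤ 2 := by
      calc (#{i | ¬ w i < 1 / N} : ℝ) * (1 / N) = ∑ i with ¬ w i < 1 / N, (1 / N : ℝ) := by simp
        _ ≤ ∑ i with ¬ w i < 1 / N, w i := Finset.sum_le_sum fun i hi => by
          simpa using (Finset.mem_filter.1 hi).2
        _ ≤ ∑ i, w i := Finset.sum_le_sum_of_subset_of_nonneg (Finset.filter_subset _ _)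
          fun _ _ _ => hw _
        _ ≤ 2 := hsw
    have h3 : (#{i | ¬ w i < 1 / N} : ℝ) ≤ 2 * N := by
      rw [mul_one_div, div_le_iff₀ hN'] at h2
      exact h2
    exact_mod_cast h3
  refine ⟨D * K + D' * K * D + G1 * H1 + G2 * H2, ?_, ?_⟩
  · have r1 := rank_add_le' (D * K + D' * K * D + G1 * H1) (G2 * H2)
    have r2 := rank_add_le' (D * K + D' * K * D) (G1 * H1)
    have r3 := rank_add_le' (D * K) (D' * K * D)
    have r4 := Matrix.rank_mul_le_left D K
    have r5 := Matrix.rank_mul_le_right (D' * K) D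
    have r6 := Matrix.rank_mul_le_left G1 H1
    have r7 := Matrix.rank_mul_le_left G2 H2
    have r8 := Matrix.rank_le_width G1
    have r9 := Matrix.rank_le_width G2
    omega
  · have hent : ∀ i j, (K - (D * K + D' * K * D + G1 * H1 + G2 * H2)) i j =
        (χ i * a i) * (χ j * star (b j)) *
          ((dq f (μ i) (μ j) - (p1 i (c j) + p2 (c i) j) : ℝ) : ℂ) := by
      intro i j
      have e1 : (G1 * H1) i j = χ i * a i * (p1 i (c j) : ℂ) * (χ j * star (b j)) := by
        simp [Matrix.mul_apply, G1, H1]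
      have e2 : (G2 * H2) i j = χ i * a i * ((p2 (c i) j : ℂ) * (χ j * star (b j))) := by
        simp [Matrix.mul_apply, G2, H2]
      have e3 : (D * K) i j = (1 - χ i) * K i j := by simp [D, Matrix.diagonal_mul]
      have e4 : (D' * K * D) i j = χ i * K i j * (1 - χ j) := by
        simp [D, D', Matrix.diagonal_mul, Matrix.mul_diagonal]
      have e5 : K i j = (dq f (μ i) (μ j) : ℂ) * (a i * star (b j)) := rfl
      rw [Matrix.sub_apply, Matrix.add_apply, Matrix.add_apply, Matrix.add_apply, e1, e2, e3, e4, e5]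
      push_cast
      ring
    let u : Fin d → ℝ := fun i => if w i < 1 / N then w i else 0
    have hu : ∀ i, 0 ≤ u i := fun i => by simp only [u]; split_ifs; exacts [hw i, le_rfl]
    have hχ : ∀ i, ‖χ i * a i‖ ^ 2 ≤ u i := by
      intro i
      simp only [χ, u, w]
      split_ifs
      · simp
      · simp
    have hχ' : ∀ i, ‖χ i * star (b i)‖ ^ 2 ≤ u i := by
      intro i
      simp only [χ, u, w]
      split_ifs
      · simp
      · simp
    have hM0 : ∀ m, 0 ≤ ∑ i with c i = m, u i := fun m => Finset.sum_nonneg fun i _ => hu i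
    calc hs (K - (D * K + D' * K * D + G1 * H1 + G2 * H2))
        ≤ ∑ i, ∑ j, E (c i) (c j) * u j * u i := by
          refine Finset.sum_le_sum fun i _ => Finset.sum_le_sum fun j _ => ?_
          rw [hent, norm_mul, norm_mul, mul_pow, mul_pow, Complex.norm_real, Real.norm_eq_abs,
            sq_abs]
          have := mul_le_mul (mul_le_mul (hχ i) (hχ' j) (sq_nonneg _) (hu i)) (hE i j) (sq_nonneg _)
            (mul_nonneg (hu i) (hu j))
          refine this.trans (le_of_eq (by ring))
      _ = ∑ i, (∑ n, E (c i) n * ∑ j with c j = n, u j) * u i := by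
          refine Finset.sum_congr rfl fun i _ => ?_
          rw [← Finset.sum_mul, sum_fiber c (fun n => E (c i) n) u]
      _ = ∑ m, (∑ n, E m n * ∑ j with c j = n, u j) * ∑ i with c i = m, u i :=
          sum_fiber c (fun m => ∑ n, E m n * ∑ j with c j = n, u j) u
      _ ≤ ∑ m, (∑ n, E m n * (3 / N)) * (3 / N) := by
          refine Finset.sum_le_sum fun m _ => ?_
          refine mul_le_mul (Finset.sum_le_sum fun n _ =>
            mul_le_mul_of_nonneg_left (hmass n) (hE0 m n)) (hmass m) (hM0 m) ?_
          exact Finset.sum_nonneg fun n _ => mul_nonneg (hE0 m n) (by positivity)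
      _ = (∑ m, ∑ n, E m n) * (9 / N ^ 2) := by
          simp only [← Finset.sum_mul]; ring
      _ ≤ (129 * ((N + 1 : ℕ) : ℝ)) * (9 / N ^ 2) := by gcongr
      _ ≤ 2500 / N := by
          have h1 : (1:ℝ) ≤ N := by exact_mod_cast hN
          push_cast
          rw [mul_div_assoc', div_le_div_iff₀ (by positivity) hN']
          nlinarith

lemma approx {d : ℕ} {f : ℝ → ℝ} (hf : LipschitzWith 1 f)
    (μ : Fin d → ℝ) (a b : Fin d → ℂ)
    (ha : ∑ i, ‖a i‖ ^ 2 ≤ 1) (hb : ∑ i, ‖b i‖ ^ 2 ≤ 1) (N : ℕ) (hN : 0 < N) :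
    ∃ R : Matrix (Fin d) (Fin d) ℂ, R.rank ≤ 8 * N ∧ hs (Kmat f μ a b - R) ≤ 2500 / N := by
  let s := Tuple.sort μ
  obtain ⟨R, h1, h2⟩ := approx_mono hf (Tuple.monotone_sort μ) (a ∘ s) (b ∘ s)
    (by rw [← Equiv.sum_comp s] at ha; exact ha) (by rw [← Equiv.sum_comp s] at hb; exact hb) N hN
  refine ⟨R.submatrix s.symm s.symm, ?_, ?_⟩
  · rw [Matrix.rank_submatrix]; exact h1
  · refine le_trans (le_of_eq ?_) h2
    unfold hs
    rw [← Equiv.sum_comp s]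
    refine Finset.sum_congr rfl fun i _ => ?_
    rw [← Equiv.sum_comp s]
    refine Finset.sum_congr rfl fun j _ => ?_
    simp [Kmat, s]

lemma hs_Kmat {d : ℕ} {f : ℝ → ℝ} (hf : LipschitzWith 1 f)
    (μ : Fin d → ℝ) (a b : Fin d → ℂ)
    (ha : ∑ i, ‖a i‖ ^ 2 ≤ 1) (hb : ∑ i, ‖b i‖ ^ 2 ≤ 1) : hs (Kmat f μ a b) ≤ 1 := by
  calc hs (Kmat f μ a b) ≤ ∑ i, ∑ j, ‖a i‖ ^ 2 * ‖b j‖ ^ 2 := by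
        refine Finset.sum_le_sum fun i _ => Finset.sum_le_sum fun j _ => ?_
        have h1 : ‖Kmat f μ a b i j‖ = |dq f (μ i) (μ j)| * (‖a i‖ * ‖b j‖) := by
          simp [Kmat]
        rw [h1, mul_pow, mul_pow]
        have := dq_abs hf (μ i) (μ j)
        have h2 : |dq f (μ i) (μ j)| ^ 2 ≤ 1 := pow_le_one₀ (abs_nonneg _) this
        exact mul_le_of_le_one_left (by positivity) h2
    _ = (∑ i, ‖a i‖ ^ 2) * ∑ j, ‖b j‖ ^ 2 := by rw [Finset.sum_mul_sum]
    _ ≤ 1 := mul_le_one₀ ha (Finset.sum_nonneg fun _ _ => sq_nonneg _) hb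

lemma chain {d : ℕ} {f : ℝ → ℝ} (hf : LipschitzWith 1 f)
    (μ : Fin d → ℝ) (a b : Fin d → ℂ)
    (ha : ∑ i, ‖a i‖ ^ 2 ≤ 1) (hb : ∑ i, ‖b i‖ ^ 2 ≤ 1)
    {X : Matrix (Fin d) (Fin d) ℂ} (hX : Contr X) (n : ℕ) :
    ∃ R : Matrix (Fin d) (Fin d) ℂ, R.rank ≤ 8 * 2 ^ n ∧
      hs (Kmat f μ a b - R) ≤ 2500 / 2 ^ n ∧ ‖(Xᴴ * R).trace‖ ≤ 425 * n := by
  induction n with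
  | zero =>
    refine ⟨0, by simp, ?_, by simp⟩
    have := hs_Kmat hf μ a b ha hb
    simp only [sub_zero, pow_zero, div_one]
    linarith
  | succ n ih =>
    obtain ⟨R, h1, h2, h3⟩ := ih
    obtain ⟨R', h1', h2'⟩ := approx hf μ a b ha hb (2 ^ (n+1)) (by positivity)
    push_cast at h2'
    refine ⟨R', h1', h2', ?_⟩
    have hp : (0:ℝ) < 2 ^ n := by positivity
    have e : R' - R = (Kmat f μ a b - R) + -(Kmat f μ a b - R') := by abel
    have hneg : ∀ M : Matrix (Fin d) (Fin d) ℂ, hs (-M) = hs M := fun M => by simp [hs]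
    have hh : hs (R' - R) ≤ 7500 / 2 ^ n := by
      rw [e]
      refine (hs_add_le _ _).trans ?_
      rw [hneg]
      have : (2500:ℝ) / 2 ^ (n+1) = 1250 / 2 ^ n := by rw [pow_succ]; field_simp; norm_num
      rw [this] at h2'
      have e2 : (7500:ℝ) / 2 ^ n = 2 * (2500 / 2 ^ n) + 2 * (1250 / 2 ^ n) := by ring
      rw [e2]; linarith
    have hr : (R' - R).rank ≤ 24 * 2 ^ n := by
      have e3 : R' - R = R' + (-1 : Matrix (Fin d) (Fin d) ℂ) * R := by simp [sub_eq_add_neg]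
      have := rank_add_le' R' ((-1 : Matrix (Fin d) (Fin d) ℂ) * R)
      have := Matrix.rank_mul_le_right (-1 : Matrix (Fin d) (Fin d) ℂ) R
      rw [e3]
      rw [pow_succ] at h1'
      omega
    have ht : ‖(Xᴴ * (R' - R)).trace‖ ≤ 425 := by
      refine (trace_contr_le hX _).trans ?_
      refine le_of_sq_le_sq ?_ (by norm_num)
      refine (sum_sv_le _).trans ?_
      have hr' : ((R' - R).rank : ℝ) ≤ 24 * 2 ^ n := by exact_mod_cast hr
      calc ((R' - R).rank : ℝ) * hs (R' - R) ≤ (24 * 2 ^ n) * (7500 / 2 ^ n) := by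
            gcongr
            exact hs_nonneg _
        _ = 180000 := by field_simp; norm_num
        _ ≤ 425 ^ 2 := by norm_num
    have e4 : Xᴴ * R' = Xᴴ * R + Xᴴ * (R' - R) := by rw [← Matrix.mul_add]; congr 1; abel
    rw [e4, Matrix.trace_add]
    refine (norm_add_le _ _).trans ?_
    push_cast
    linarith

lemma key {d : ℕ} {f : ℝ → ℝ} (hf : LipschitzWith 1 f)
    (μ : Fin d → ℝ) (a b : Fin d → ℂ)
    (ha : ∑ i, ‖a i‖ ^ 2 ≤ 1) (hb : ∑ i, ‖b i‖ ^ 2 ≤ 1)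
    {X : Matrix (Fin d) (Fin d) ℂ} (hX : Contr X) (k : ℕ) (hk : 0 < k) (hXk : hs X ≤ k) :
    ‖(Xᴴ * Kmat f μ a b).trace‖ ≤ 2202 * Real.log (1 + k) := by
  set m := Nat.log 2 k + 1 with hm
  obtain ⟨R, -, h2, h3⟩ := chain hf μ a b ha hb hX m
  have hk1 : (k:ℝ) ≤ 2 ^ m := by exact_mod_cast (Nat.lt_pow_succ_log_self (by norm_num) k).le
  have hk2 : (2:ℝ) ^ m ≤ 2 * k := by
    have := Nat.pow_log_le_self 2 hk.ne'
    have h' : 2 ^ m ≤ 2 * k := by rw [hm, pow_succ]; omega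
    exact_mod_cast h'
  have hk0 : (1:ℝ) ≤ k := by exact_mod_cast hk
  have hp : (0:ℝ) < 2 ^ m := by positivity
  have h4 : ‖(Xᴴ * (Kmat f μ a b - R)).trace‖ ≤ 50 := by
    refine le_of_sq_le_sq ?_ (by norm_num)
    refine (trace_hs_le _ _).trans ?_
    calc hs X * hs (Kmat f μ a b - R) ≤ 2 ^ m * (2500 / 2 ^ m) :=
          mul_le_mul (hXk.trans hk1) h2 (hs_nonneg _) hp.le
      _ = 50 ^ 2 := by field_simp; norm_num
  have e4 : Xᴴ * Kmat f μ a b = Xᴴ * R + Xᴴ * (Kmat f μ a b - R) := by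
    rw [← Matrix.mul_add]; congr 1; abel
  rw [e4, Matrix.trace_add]
  refine (norm_add_le _ _).trans ?_
  have l2 : (1:ℝ) / 2 ≤ Real.log 2 := by linarith [Real.log_two_gt_d9]
  have l3 : Real.log 2 ≤ Real.log (1 + k) := Real.log_le_log (by norm_num) (by linarith)
  have l4 : m * Real.log 2 ≤ 2 * Real.log (1 + k) := by
    have : Real.log (2 ^ m) ≤ Real.log ((1 + k) ^ 2) := Real.log_le_log hp (by nlinarith)
    rw [Real.log_pow, Real.log_pow] at this
    exact_mod_cast this
  have l5 : (m:ℝ) * (1/2) ≤ m * Real.log 2 := by gcongr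
  linarith

lemma Kmat_smul {d : ℕ} (f : ℝ → ℝ) (μ : Fin d → ℝ) (a b : Fin d → ℂ) (t : ℂ) :
    Kmat f μ (fun i => t * a i) b = t • Kmat f μ a b := by
  ext i j; simp [Kmat]; ring

lemma key' {d : ℕ} {f : ℝ → ℝ} (hf : LipschitzWith 1 f)
    (μ : Fin d → ℝ) (a b : Fin d → ℂ) {s : ℝ} (hs0 : 0 ≤ s)
    (ha : ∑ i, ‖a i‖ ^ 2 = s ^ 2) (hb : ∑ i, ‖b i‖ ^ 2 ≤ 1)
    {X : Matrix (Fin d) (Fin d) ℂ} (hX : Contr X) (k : ℕ) (hk : 0 < k) (hXk : hs X ≤ k) :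
    ‖(Xᴴ * Kmat f μ a b).trace‖ ≤ 2202 * Real.log (1 + k) * s := by
  rcases hs0.eq_or_lt with h | h
  · have h0 : a = 0 := by
      rw [← h] at ha
      funext i
      have := (Finset.sum_eq_zero_iff_of_nonneg (fun i _ => sq_nonneg ‖a i‖)).1
        (ha.trans (by norm_num)) i (mem_univ _)
      simpa using this
    have h1 : Kmat f μ a b = 0 := by ext i j; simp [Kmat, h0]
    rw [h1, ← h]; simp
  · have hs' : (s:ℂ) ≠ 0 := by exact_mod_cast h.ne'
    have e : a = fun i => (s:ℂ) * ((s:ℂ)⁻¹ * a i) := by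
      funext i; field_simp
    rw [e, Kmat_smul, Matrix.mul_smul, Matrix.trace_smul, norm_smul, Complex.norm_real,
      Real.norm_of_nonneg hs0, mul_comm]
    gcongr
    refine key hf μ _ b ?_ hb hX k hk hXk
    simp only [norm_mul, mul_pow, ← Finset.mul_sum, ha, norm_inv, Complex.norm_real,
      Real.norm_of_nonneg hs0]
    apply le_of_eq
    field_simp

end WL

/-- Matrix form of Corollary 5.6 of the paper, a weak `L¹`-type (`M_{1,∞}`) inequality:
there is an absolute constant `C > 0` such that for every `1`-Lipschitz `f : ℝ → ℝ`,
every Hermitian `A = U diag(μ) U*`, every `x`, and every nonempty set `S` of indices,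
the singular values of `T = [f(A), x]` satisfy
`∑_{i ∈ S} σᵢ(T) ≤ C log(1 + |S|) ‖[A, x]‖₁`. -/
theorem weak_L1_commutator_estimate :
    ∃ C : ℝ, 0 < C ∧ ∀ (d : ℕ), 1 ≤ d →
      ∀ (f : ℝ → ℝ), LipschitzWith 1 f →
      ∀ (U : Matrix (Fin d) (Fin d) ℂ), U ∈ Matrix.unitaryGroup (Fin d) ℂ →
      ∀ (μ : Fin d → ℝ) (A x : Matrix (Fin d) (Fin d) ℂ),
        A = U * Matrix.diagonal (fun i => (μ i : ℂ)) * Uᴴ →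
      ∀ S : Finset (Fin d), S.Nonempty →
        ∑ i ∈ S, singularValues
            ((U * Matrix.diagonal (fun i => (f (μ i) : ℂ)) * Uᴴ) * x
              - x * (U * Matrix.diagonal (fun i => (f (μ i) : ℂ)) * Uᴴ)) i
          ≤ C * Real.log (1 + (S.card : ℝ)) * schattenNorm 1 (A * x - x * A) := by
  refine ⟨2202, by norm_num, ?_⟩
  intro d _ f hf U hU μ A x hA S hS
  have hU1 : Uᴴ * U = 1 := Matrix.mem_unitaryGroup_iff'.1 hU
  have hU2 : U * Uᴴ = 1 := Matrix.mem_unitaryGroup_iff.1 hU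
  set x' := Uᴴ * x * U with hx'
  have hcomm : ∀ D : Matrix (Fin d) (Fin d) ℂ,
      Uᴴ * ((U * D * Uᴴ) * x - x * (U * D * Uᴴ)) * U = D * x' - x' * D := by
    intro D
    have e1 : Uᴴ * ((U * D * Uᴴ) * x - x * (U * D * Uᴴ)) * U
        = (Uᴴ * U) * D * (Uᴴ * x * U) - (Uᴴ * x * U) * D * (Uᴴ * U) := by
      simp only [Matrix.mul_sub, Matrix.sub_mul, Matrix.mul_assoc]
    rw [e1, hU1, Matrix.one_mul, Matrix.mul_one]
  set T := (U * Matrix.diagonal (fun i => (f (μ i) : ℂ)) * Uᴴ) * x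
              - x * (U * Matrix.diagonal (fun i => (f (μ i) : ℂ)) * Uᴴ) with hT
  set Y := A * x - x * A with hY
  obtain ⟨X, hX, hXk, hXT⟩ := WL.exists_dual T S
  obtain ⟨G, V, hV1, hV2, hYG, hG⟩ := WL.svd Y
  let a : Fin d → Fin d → ℂ := fun k i => (Uᴴ * G) i k
  let b : Fin d → Fin d → ℂ := fun k i => (Uᴴ * V) i k
  have hUU : ∀ M : Matrix (Fin d) (Fin d) ℂ, (Uᴴ * M)ᴴ * (Uᴴ * M) = Mᴴ * M := by
    intro M
    have : (Uᴴ * M)ᴴ * (Uᴴ * M) = Mᴴ * (U * Uᴴ) * M := by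
      simp only [Matrix.conjTranspose_mul, Matrix.conjTranspose_conjTranspose, Matrix.mul_assoc]
    rw [this, hU2, Matrix.mul_one]
  have ha : ∀ k, ∑ i, ‖a k i‖ ^ 2 = singularValues Y k ^ 2 := fun k =>
    WL.col_norm (G := Uᴴ * G) (s := fun k => singularValues Y k ^ 2) (by rw [hUU, hG]) k
  have hb : ∀ k, ∑ i, ‖b k i‖ ^ 2 ≤ 1 := fun k =>
    (WL.col_norm (G := Uᴴ * V) (s := fun k => 1) (by
      rw [hUU, hV1]; ext i j; simp [Matrix.one_apply, Matrix.diagonal_apply]) k).le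
  -- entries
  have hY' : ∀ i j, ((μ i : ℂ) - μ j) * x' i j = ∑ k, a k i * star (b k j) := by
    intro i j
    have e1 : Uᴴ * Y * U = (Uᴴ * G) * (Uᴴ * V)ᴴ := by
      rw [hYG]
      simp only [Matrix.conjTranspose_mul, Matrix.conjTranspose_conjTranspose, Matrix.mul_assoc]
    have e2 := hcomm (Matrix.diagonal (fun i => (μ i : ℂ)))
    rw [← hA, ← hY] at e2
    rw [e1] at e2
    have := congrFun (congrFun e2 i) j
    rw [Matrix.sub_apply, Matrix.diagonal_mul, Matrix.mul_diagonal, Matrix.mul_apply] at this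
    simp only [Matrix.conjTranspose_apply] at this
    rw [show (∑ k, a k i * star (b k j)) = _ from this]
    ring
  have hT' : Uᴴ * T * U = ∑ k, WL.Kmat f μ (a k) (b k) := by
    rw [hT, hcomm]
    ext i j
    rw [Matrix.sub_apply, Matrix.diagonal_mul, Matrix.mul_diagonal, Matrix.sum_apply]
    simp only [WL.Kmat, Matrix.of_apply]
    rw [← Finset.mul_sum, ← hY', WL.dq]
    by_cases h : μ i = μ j
    · simp [h]; ring
    · have : (μ i : ℂ) - μ j ≠ 0 := by
        rw [sub_ne_zero]; exact_mod_cast h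
      push_cast
      field_simp
  have htr : (Xᴴ * T).trace = ((Uᴴ * X * U)ᴴ * (Uᴴ * T * U)).trace := by
    have : (Uᴴ * X * U)ᴴ * (Uᴴ * T * U) = Uᴴ * (Xᴴ * (U * Uᴴ) * T * U) := by
      simp only [Matrix.conjTranspose_mul, Matrix.conjTranspose_conjTranspose, Matrix.mul_assoc]
    rw [this, hU2, Matrix.trace_mul_comm Uᴴ, Matrix.mul_one, Matrix.mul_assoc _ U, hU2,
      Matrix.mul_one]
  have hX' := WL.contr_unitary hX hU1 hU2
  have hXk' : WL.hs (Uᴴ * X * U) ≤ S.card := by rw [WL.hs_unitary hU2]; exact hXk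
  have hsch : schattenNorm 1 Y = ∑ i, singularValues Y i := by
    simp [schattenNorm]
  calc ∑ i ∈ S, singularValues T i = ‖(Xᴴ * T).trace‖ := by
        rw [hXT, Complex.norm_real, Real.norm_of_nonneg]
        exact Finset.sum_nonneg fun i _ => WL.sv_nonneg _ _
    _ = ‖∑ k, ((Uᴴ * X * U)ᴴ * WL.Kmat f μ (a k) (b k)).trace‖ := by
        rw [htr, hT', Matrix.mul_sum, Matrix.trace_sum]
    _ ≤ ∑ k, 2202 * Real.log (1 + (S.card : ℝ)) * singularValues Y k := by
        refine (norm_sum_le _ _).trans (Finset.sum_le_sum fun k _ => ?_)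
        exact WL.key' hf μ (a k) (b k) (WL.sv_nonneg _ _) (ha k) (hb k) hX' _ hS.card_pos hXk'
    _ = _ := by rw [hsch, Finset.mul_sum]
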